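/- Let X be a Banach space over 𝕜, let f_1, …, f_n and g_1, …, g_m be linear functionals on X, and let τ_1, …, τ_n ∈ X and ω_1, …, ω_m ∈ X satisfy x = Σ_{j=1}^n f_j(x) τ_j = Σ_{k=1}^m g_k(x) ω_k for all x ∈ X. Then for every x ∈ X with x ≠ 0, ‖θ_f x‖₀ · ‖θ_g x‖₀ ≥ 1 / ( (max_{1≤j≤n, 1≤k≤m} |f_j(ω_k)|) · (max_{1≤j≤n, 1≤k≤m} |g_k(τ_j)|) ), where ‖θ_f x‖₀ := #{j ∈ {1,…,n} : f_j(x) ≠ 0} and ‖θ_g x‖₀ := #{k ∈ {1,…,m} : g_k(x) ≠ 0}. -/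

import Mathlib

/-!
Write `A x = (f_j x)_j` and `B x = (g_k x)_k` for the two coefficient vectors. Applying `A` to the
expansion of `x` along `ω` gives `A x = ∑ k, (B x)_k • A (ω k)`, a sum with `‖B x‖₀` nonzero terms,
so that in sup norms `‖A x‖ ≤ ‖B x‖₀ * ‖B x‖ * max |f_j (ω_k)|`. The same bound holds with the roles
of `A` and `B` exchanged. Neither vector vanishes, so multiplying the two bounds and cancelling
`‖A x‖ * ‖B x‖` gives the inequality.
-/

section SupNorm

variable {ι κ : Type*} [Fintype ι] [Fintype κ]

theorem pi_norm_eq_ciSup {E : ι → Type*} [∀ i, SeminormedAddCommGroup (E i)] (v : ∀ i, E i) :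
    ‖v‖ = ⨆ i, ‖v i‖ :=
  le_antisymm
    ((pi_norm_le_iff_of_nonneg (Real.iSup_nonneg fun _ ↦ norm_nonneg _)).2 (Finite.le_ciSup _))
    (Real.iSup_le (norm_le_pi_norm v) (norm_nonneg v))

theorem pi_norm_eq_ciSup_ciSup {E : Type*} [SeminormedAddCommGroup E] (a : ι → κ → E) :
    ‖a‖ = ⨆ i, ⨆ k, ‖a i k‖ := by
  simp_rw [pi_norm_eq_ciSup]

theorem pi_norm_flip {E : Type*} [SeminormedAddCommGroup E] (a : ι → κ → E) : ‖flip a‖ = ‖a‖ :=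
  -- The entrywise matrix norm is, definitionally, the sup norm on `ι → κ → E`.
  Matrix.norm_transpose a

theorem norm_sum_smul_le_hammingNorm_mul {R E : Type*} [SeminormedRing R] [DecidableEq R]
    [SeminormedAddCommGroup E] [Module R E] [IsBoundedSMul R E] (c : ι → R) (v : ι → E) :
    ‖∑ i, c i • v i‖ ≤ hammingNorm c * (‖c‖ * ‖v‖) := by
  have term_le (i : ι) : ‖c i • v i‖ ≤ ‖c‖ * ‖v‖ :=
    (norm_smul_le _ _).trans <| by gcongr <;> exact norm_le_pi_norm _ i
  calc ‖∑ i, c i • v i‖ = ‖∑ i with c i ≠ 0, c i • v i‖ := by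
        rw [Finset.sum_filter_of_ne fun i _ ↦ left_ne_zero_of_smul]
    _ ≤ ∑ i with c i ≠ 0, ‖c i • v i‖ := norm_sum_le _ _
    _ ≤ hammingNorm c • (‖c‖ * ‖v‖) := Finset.sum_le_card_nsmul _ _ _ fun i _ ↦ term_le i
    _ = hammingNorm c * (‖c‖ * ‖v‖) := nsmul_eq_mul _ _

end SupNorm

theorem natCard_subtype_ne_zero {ι : Type*} {β : ι → Type*} [Fintype ι] [∀ i, Zero (β i)]
    [∀ i, DecidableEq (β i)] (v : ∀ i, β i) : Nat.card {i // v i ≠ 0} = hammingNorm v :=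
  Nat.subtype_card _ <| by simp

section Expansion

variable {ι κ R X : Type*} [Fintype ι] [Fintype κ] [AddCommMonoid X]

theorem coeff_ne_zero_of_eq_sum_smul [Semiring R] [Module R X] {c : ι → R} {τ : ι → X} {x : X}
    (hc : x = ∑ i, c i • τ i) (hx : x ≠ 0) : c ≠ 0 := by
  rintro rfl
  exact hx (by simpa using hc)

theorem norm_map_le_hammingNorm_mul {E : Type*} [SeminormedRing R] [DecidableEq R] [Module R X]
    [SeminormedAddCommGroup E] [Module R E] [IsBoundedSMul R E] (T : X →ₗ[R] E) {c : ι → R}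
    {τ : ι → X} {x : X} (hc : x = ∑ i, c i • τ i) :
    ‖T x‖ ≤ hammingNorm c * (‖c‖ * ‖T ∘ τ‖) := by
  have apply_eq : T x = ∑ i, c i • (T ∘ τ) i := by
    simpa only [map_sum, map_smul, Function.comp_apply] using congrArg T hc
  exact apply_eq ▸ norm_sum_smul_le_hammingNorm_mul c (T ∘ τ)

variable [NormedRing R] [Module R X]

theorem one_le_hammingNorm_mul_hammingNorm_mul_norm [DecidableEq R]
    (A : X →ₗ[R] ι → R) (B : X →ₗ[R] κ → R) {τ : ι → X} {ω : κ → X} {x : X}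
    (hA : x = ∑ j, A x j • τ j) (hB : x = ∑ k, B x k • ω k) (hx : x ≠ 0) :
    1 ≤ (hammingNorm (A x) * hammingNorm (B x) : ℝ) * (‖A ∘ ω‖ * ‖B ∘ τ‖) := by
  have A_pos : 0 < ‖A x‖ := norm_pos_iff.2 (coeff_ne_zero_of_eq_sum_smul hA hx)
  have B_pos : 0 < ‖B x‖ := norm_pos_iff.2 (coeff_ne_zero_of_eq_sum_smul hB hx)
  refine le_of_mul_le_mul_right ?_ (mul_pos A_pos B_pos)
  calc 1 * (‖A x‖ * ‖B x‖) = ‖A x‖ * ‖B x‖ := one_mul _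
    _ ≤ (hammingNorm (B x) * (‖B x‖ * ‖A ∘ ω‖)) * (hammingNorm (A x) * (‖A x‖ * ‖B ∘ τ‖)) :=
        mul_le_mul (norm_map_le_hammingNorm_mul A hB) (norm_map_le_hammingNorm_mul B hA) B_pos.le
          (by positivity)
    _ = hammingNorm (A x) * hammingNorm (B x) * (‖A ∘ ω‖ * ‖B ∘ τ‖) * (‖A x‖ * ‖B x‖) := by ring

theorem finite_schauder_frame_uncertainty_general
    (f : ι → X →ₗ[R] R) (g : κ → X →ₗ[R] R) (τ : ι → X) (ω : κ → X) (x : X)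
    (hf : x = ∑ j, f j x • τ j) (hg : x = ∑ k, g k x • ω k) (hx : x ≠ 0) :
    1 / ((⨆ j, ⨆ k, ‖f j (ω k)‖) * (⨆ j, ⨆ k, ‖g k (τ j)‖)) ≤
      (Nat.card {j // f j x ≠ 0} : ℝ) * (Nat.card {k // g k x ≠ 0} : ℝ) := by
  classical
  let A := LinearMap.pi f
  let B := LinearMap.pi g
  have norm_A : ‖A ∘ ω‖ = ⨆ j, ⨆ k, ‖f j (ω k)‖ :=
    (pi_norm_flip (A ∘ ω)).symm.trans (pi_norm_eq_ciSup_ciSup _)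
  have norm_B : ‖B ∘ τ‖ = ⨆ j, ⨆ k, ‖g k (τ j)‖ := pi_norm_eq_ciSup_ciSup _
  rw [← norm_A, ← norm_B, natCard_subtype_ne_zero, natCard_subtype_ne_zero]
  exact div_le_of_le_mul₀ (by positivity) (by positivity)
    (one_le_hammingNorm_mul_hammingNorm_mul_norm A B hf hg hx)

end Expansion

/-- Finite-dimensional corollary: for Schauder-frame-type expansions of the identity
`x = Σ f_j(x) τ_j = Σ g_k(x) ω_k` on a Banach space, for every nonzero `x`,
`‖θ_f x‖₀ · ‖θ_g x‖₀ ≥ 1 / ((max |f_j(ω_k)|) · (max |g_k(τ_j)|))`. -/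
theorem finite_schauder_frame_uncertainty
    {𝕜 X : Type*} [RCLike 𝕜]
    [NormedAddCommGroup X] [NormedSpace 𝕜 X] [CompleteSpace X]
    {n m : ℕ}
    (f : Fin n → X →ₗ[𝕜] 𝕜) (g : Fin m → X →ₗ[𝕜] 𝕜)
    (τ : Fin n → X) (ω : Fin m → X)
    (hf : ∀ x : X, x = ∑ j, f j x • τ j)
    (hg : ∀ x : X, x = ∑ k, g k x • ω k)
    (x : X) (hx : x ≠ 0) :
    1 / ((⨆ j, ⨆ k, ‖f j (ω k)‖) * (⨆ j, ⨆ k, ‖g k (τ j)‖)) ≤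
      (Nat.card {j : Fin n // f j x ≠ 0} : ℝ) *
        (Nat.card {k : Fin m // g k x ≠ 0} : ℝ) :=
  finite_schauder_frame_uncertainty_general f g τ ω x (hf x) (hg x) hx
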